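/- Let (X, μ) be a standard Borel probability space, let ρ be an admissible summable semimetric on X, and let T: X → X be a measure-preserving transformation (not necessarily invertible). For k ≥ 0 set (T^k ρ)(x,y) = ρ(T^k x, T^k y), and for n ≥ 1 set ρ_n^{av} = n^{-1} Σ_{k=1}^{n} T^k ρ. If for every ε>0 the ε-entropies H_ε(ρ_n^{av}, μ), n = 1, 2, …, are uniformly bounded, then the orbit {ρ, Tρ, T²ρ, …} is precompact in the m-norm (equivalently, in L¹(X×X, μ×μ)). -/

import Mathlib

open MeasureTheory Filter Function Set
open scoped ENNReal

/-- A semimetric on `X`: a nonnegative function vanishing on the diagonal, symmetric and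
satisfying the triangle inequality for all points. -/
def IsSemimetric {X : Type*} (ρ : X → X → ℝ) : Prop :=
  (∀ x y, 0 ≤ ρ x y) ∧ (∀ x, ρ x x = 0) ∧ (∀ x y, ρ x y = ρ y x) ∧
    ∀ x y z, ρ x z ≤ ρ x y + ρ y z

/-- A metric on `X`: a semimetric that separates points. -/
def IsMetricFun {X : Type*} (ρ : X → X → ℝ) : Prop :=
  IsSemimetric ρ ∧ ∀ x y, ρ x y = 0 ↔ x = y

/-- The semimetric space `(S, ρ)` is separable. -/
def SeparableOn {X : Type*} (ρ : X → X → ℝ) (S : Set X) : Prop :=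
  ∃ D : Set X, D ⊆ S ∧ D.Countable ∧ ∀ x ∈ S, ∀ ε : ℝ, 0 < ε → ∃ y ∈ D, ρ x y < ε

/-- A semimetric is admissible for `(X, μ)` if it is measurable on `(X × X, μ × μ)` and
separable on a subset of full measure. -/
def Admissible {X : Type*} [MeasurableSpace X] (μ : Measure X) (ρ : X → X → ℝ) : Prop :=
  Measurable (Function.uncurry ρ) ∧
    ∃ S : Set X, MeasurableSet S ∧ μ Sᶜ = 0 ∧ SeparableOn ρ S

/-- An `ε`-cover of size `k`: `X = X₀ ∪ X₁ ∪ ⋯ ∪ X_k` with `μ(X₀) < ε` and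
`diam_ρ(X_j) < ε` for `j = 1, …, k`. -/
def IsEpsCover {X : Type*} [MeasurableSpace X] (μ : Measure X) (ρ : X → X → ℝ)
    (ε : ℝ) (k : ℕ) : Prop :=
  ∃ A : Fin (k + 1) → Set X, (∀ i, MeasurableSet (A i)) ∧ (⋃ i, A i) = Set.univ ∧
    μ (A 0) < ENNReal.ofReal ε ∧
    ∀ i, i ≠ 0 → ∀ x ∈ A i, ∀ y ∈ A i, ρ x y < ε

/-- The `ε`-entropy of `(X, μ, ρ)`: the binary logarithm of the smallest size of an
`ε`-cover, and `∞` if there is no finite `ε`-cover. -/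
noncomputable def epsEntropy {X : Type*} [MeasurableSpace X] (μ : Measure X)
    (ρ : X → X → ℝ) (ε : ℝ) : ℝ≥0∞ :=
  sInf {h : ℝ≥0∞ | ∃ k : ℕ, IsEpsCover μ ρ ε k ∧ h = ENNReal.ofReal (Real.logb 2 k)}

/-- The m-norm of `f`: the infimum of the `L¹`-norms of measurable semimetrics
dominating `|f|` almost everywhere (`∞` if there is no such semimetric). -/
noncomputable def mnorm {X : Type*} [MeasurableSpace X] (μ : Measure X)
    (f : X → X → ℝ) : ℝ≥0∞ :=
  sInf {c : ℝ≥0∞ | ∃ ρ : X → X → ℝ, IsSemimetric ρ ∧ Measurable (Function.uncurry ρ) ∧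
    (∀ᵐ p ∂(μ.prod μ), |f p.1 p.2| ≤ ρ p.1 p.2) ∧
    c = ∫⁻ p, ENNReal.ofReal (ρ p.1 p.2) ∂(μ.prod μ)}

/-- The m-distance between two functions. -/
noncomputable def mdist {X : Type*} [MeasurableSpace X] (μ : Measure X)
    (f g : X → X → ℝ) : ℝ≥0∞ :=
  mnorm μ fun x y => f x y - g x y

/-- The `L¹(X × X, μ × μ)` distance between two functions. -/
noncomputable def L1dist {X : Type*} [MeasurableSpace X] (μ : Measure X)
    (f g : X → X → ℝ) : ℝ≥0∞ :=
  ∫⁻ p, ENNReal.ofReal |f p.1 p.2 - g p.1 p.2| ∂(μ.prod μ)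

/-- Total boundedness (precompactness) of a set of functions w.r.t. an extended distance. -/
def TotallyBoundedIn {X : Type*} (d : (X → X → ℝ) → (X → X → ℝ) → ℝ≥0∞)
    (M : Set (X → X → ℝ)) : Prop :=
  ∀ ε : ℝ≥0∞, 0 < ε → ∃ T : Set (X → X → ℝ), T.Finite ∧ ∀ f ∈ M, ∃ g ∈ T, d f g < ε

open scoped NNReal

/-!
Cutting `X` along an `ε`-cover of the average of `T ρ, …, T^N ρ` and applying Markov's inequality
and the pigeonhole principle, one finds a proportion of these semimetrics, bounded below
independently of `N`, that are pairwise close: each is determined up to a small error by its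
finitely many values on representatives of the cells, and the error in `|T^a ρ - T^b ρ|` splits as
`u x + u y`. Closeness in this split sense is invariant under `T` in both directions, because `u`
can be replaced by its conditional expectation given `T`. Hence the translates of such a cluster by
the elements of a separated set `B` of exponents are disjoint, and letting `N → ∞` bounds the size
of `B`. Summability of `ρ` is used to reduce to bounded semimetrics by truncation.
-/

section Combinatorics

variable {ι : Type*}

theorem card_le_of_pairwise_not_rel {R : ℕ → ℕ → Prop}
    (hshift : ∀ a b q, R (a + q) (b + q) ↔ R a b) {L : ℕ}
    (hL : ∀ N, 0 < N → ∃ S ⊆ Finset.range N, N ≤ L * S.card ∧ ∀ a ∈ S, ∀ b ∈ S, R a b)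
    {B : Finset ℕ} (hB : (B : Set ℕ).Pairwise fun a b => ¬ R a b) : B.card ≤ L := by
  obtain ⟨m, hm⟩ : ∃ m, ∀ b ∈ B, b < m :=
    ⟨B.sup id + 1, fun b hb => Nat.lt_succ_of_le (Finset.le_sup (f := id) hb)⟩
  set N := L * m + 1 with hN
  obtain ⟨S, hSN, hNS, hS⟩ := hL N (Nat.succ_pos _)
  have hmaps : ∀ p ∈ B ×ˢ S, p.1 + p.2 ∈ Finset.range (m + N) := fun p hp => by
    obtain ⟨hpB, hpS⟩ := Finset.mem_product.1 hp
    exact Finset.mem_range.2 (add_lt_add (hm _ hpB) (Finset.mem_range.1 (hSN hpS)))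
  have hinj : Set.InjOn (fun p : ℕ × ℕ => p.1 + p.2) (B ×ˢ S : Finset (ℕ × ℕ)) := by
    rintro ⟨b, s⟩ hbs ⟨b', s'⟩ hbs' (heq : b + s = b' + s')
    simp only [Finset.coe_product, Set.mem_prod, Finset.mem_coe] at hbs hbs'
    have hbb : b = b' := by
      refine hB.eq hbs.1 hbs'.1 (not_not.2 ?_)
      rw [← hshift b b' s, heq, add_comm b' s', add_comm b' s, hshift]
      exact hS _ hbs'.2 _ hbs.2
    subst hbb
    simpa only [Prod.mk.injEq, true_and, add_right_inj] using heq
  have hcard : B.card * S.card ≤ m + N := by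
    simpa only [Finset.card_product, Finset.card_range] using
      Finset.card_le_card_of_injOn _ hmaps hinj
  by_contra! hlt
  have : (L + 1) * N ≤ L * (m + N) :=
    calc (L + 1) * N ≤ B.card * (L * S.card) := Nat.mul_le_mul hlt hNS
      _ = L * (B.card * S.card) := by ring
      _ ≤ L * (m + N) := Nat.mul_le_mul_left _ hcard
  linarith

theorem exists_finset_forall_exists_rel {R : ι → ι → Prop} (hrefl : ∀ a, R a a)
    (hsymm : ∀ a b, R a b → R b a) {L : ℕ}
    (hL : ∀ B : Finset ι, (B : Set ι).Pairwise (fun a b => ¬ R a b) → B.card ≤ L) :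
    ∃ B : Finset ι, ∀ a, ∃ b ∈ B, R a b := by
  classical
  obtain ⟨B, hB, hmin⟩ := exists_minimalFor_of_wellFoundedLT
    (fun B : Finset ι => (B : Set ι).Pairwise fun a b => ¬ R a b) (fun B => L - B.card)
    ⟨∅, by simp⟩
  refine ⟨B, fun a => ?_⟩
  by_contra! ha
  have haB : a ∉ B := fun h => ha a h (hrefl a)
  have hins : ((insert a B : Finset ι) : Set ι).Pairwise fun a b => ¬ R a b := by
    rw [Finset.coe_insert]
    exact hB.insert fun b hb _ => ⟨ha b hb, fun h => ha b hb (hsymm _ _ h)⟩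
  have := hL _ hins
  have := hmin hins
  grind [Finset.card_insert_of_notMem haB]

theorem card_le_two_mul_card_filter_le {s : Finset ι} {a : ι → ℝ≥0∞} {c : ℝ≥0∞}
    (hc0 : c ≠ 0) (hc : c ≠ ∞) (h : ∑ i ∈ s, a i ≤ s.card * c) :
    s.card ≤ 2 * (s.filter fun i => a i ≤ 2 * c).card := by
  have hbad : ((s.filter fun i => ¬ a i ≤ 2 * c).card : ℝ≥0∞) * 2 * c ≤ s.card * c :=
    calc ((s.filter fun i => ¬ a i ≤ 2 * c).card : ℝ≥0∞) * 2 * c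
        = (s.filter fun i => ¬ a i ≤ 2 * c).card • (2 * c) := by rw [nsmul_eq_mul, mul_assoc]
      _ ≤ ∑ i ∈ s.filter fun i => ¬ a i ≤ 2 * c, a i :=
          Finset.card_nsmul_le_sum _ _ _ fun i hi => (not_le.1 (Finset.mem_filter.1 hi).2).le
      _ ≤ ∑ i ∈ s, a i := Finset.sum_le_sum_of_subset (Finset.filter_subset _ _)
      _ ≤ s.card * c := h
  have hhalf : (s.filter fun i => ¬ a i ≤ 2 * c).card * 2 ≤ s.card := by
    exact_mod_cast (ENNReal.mul_le_mul_iff_left hc0 hc).1 hbad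
  have := Finset.card_filter_add_card_filter_not (s := s) fun i => a i ≤ 2 * c
  omega

theorem exists_card_le_mul_card_of_totallyBounded {α : Type*} [PseudoMetricSpace α] {K : Set α}
    (hK : TotallyBounded K) {ε : ℝ} (hε : 0 < ε) :
    ∃ L : ℕ, ∀ (s : Finset ι) (φ : ι → α), (∀ i ∈ s, φ i ∈ K) →
      ∃ S ⊆ s, s.card ≤ L * S.card ∧ ∀ i ∈ S, ∀ j ∈ S, dist (φ i) (φ j) < ε := by
  classical
  obtain ⟨t, ht, hKt⟩ := Metric.totallyBounded_iff.1 hK (ε / 2) (half_pos hε)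
  refine ⟨ht.toFinset.card, fun s φ hφ => ?_⟩
  obtain rfl | ⟨i₀, hi₀⟩ := s.eq_empty_or_nonempty
  · exact ⟨∅, by simp⟩
  have : Nonempty α := ⟨φ i₀⟩
  have hnear : ∀ i ∈ s, ∃ y ∈ ht.toFinset, dist (φ i) y < ε / 2 := fun i hi => by
    simpa using hKt (hφ i hi)
  choose! c hct hc using hnear
  obtain ⟨y, -, hy⟩ := ht.toFinset.exists_max_image (fun y => (s.filter (c · = y)).card)
    ⟨_, hct _ hi₀⟩
  refine ⟨s.filter (c · = y), Finset.filter_subset _ _, ?_, fun i hi j hj => ?_⟩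
  · rw [mul_comm]
    exact Finset.card_le_mul_card_image_of_maps_to hct _ hy
  · obtain ⟨his, rfl⟩ := Finset.mem_filter.1 hi
    obtain ⟨hjs, hij⟩ := Finset.mem_filter.1 hj
    calc dist (φ i) (φ j) ≤ dist (φ i) (c i) + dist (φ j) (c i) := dist_triangle_right _ _ _
      _ < ε / 2 + ε / 2 := add_lt_add (hc i his) (hij ▸ hc j hjs)
      _ = ε := add_halves ε

end Combinatorics

section SplitClose

variable {X Y : Type*} [MeasurableSpace X] [MeasurableSpace Y] {μ : Measure X} {ν : Measure Y}
  {f g h : X → X → ℝ} {η η' : ℝ≥0}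

theorem measurable_uncurry_on {f : Y → Y → ℝ} (hf : Measurable (uncurry f)) {T : X → Y}
    (hT : Measurable T) : Measurable (uncurry (f on T)) :=
  hf.comp (hT.prodMap hT)

/-- `f` and `g` differ by at most `u x + u y`, where `u` has integral at most `η`. This bounds
their m-distance by `2 * η`, but unlike the m-distance it is visibly unchanged when `f` and `g` are
composed with a measure-preserving map: only functions of one variable need to be descended. -/
def SplitClose (μ : Measure X) (η : ℝ≥0) (f g : X → X → ℝ) : Prop :=
  ∃ u : X → ℝ≥0, Measurable u ∧
    (∀ᵐ p ∂(μ.prod μ), |f p.1 p.2 - g p.1 p.2| ≤ u p.1 + u p.2) ∧ ∫⁻ x, u x ∂μ ≤ η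

theorem SplitClose.refl : SplitClose μ η f f :=
  ⟨0, measurable_zero, by simp, by simp⟩

theorem SplitClose.symm (hfg : SplitClose μ η f g) : SplitClose μ η g f := by
  simpa only [SplitClose, abs_sub_comm] using hfg

theorem SplitClose.trans (hfg : SplitClose μ η f g) (hgh : SplitClose μ η' g h) :
    SplitClose μ (η + η') f h := by
  obtain ⟨u, hu, hfu, huη⟩ := hfg
  obtain ⟨v, hv, hgv, hvη⟩ := hgh
  refine ⟨u + v, hu.add hv, ?_, ?_⟩
  · filter_upwards [hfu, hgv] with p hp hp'
    push_cast [Pi.add_apply]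
    linarith [abs_sub_le (f p.1 p.2) (g p.1 p.2) (h p.1 p.2)]
  · push_cast [Pi.add_apply]
    rw [lintegral_add_left hu.coe_nnreal_ennreal]
    exact add_le_add huη hvη

theorem SplitClose.comp [SFinite μ] [SFinite ν] {f g : Y → Y → ℝ} (hfg : SplitClose ν η f g)
    {T : X → Y} (hT : MeasurePreserving T μ ν) : SplitClose μ η (f on T) (g on T) := by
  obtain ⟨u, hu, hfu, huη⟩ := hfg
  refine ⟨u ∘ T, hu.comp hT.measurable, (hT.prod hT).quasiMeasurePreserving.ae hfu, ?_⟩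
  exact (hT.lintegral_comp hu.coe_nnreal_ennreal).trans_le huη

theorem ofReal_le_coe_add_coe {r : ℝ} {a b : ℝ≥0} (h : r ≤ a + b) :
    ENNReal.ofReal r ≤ (a + b : ℝ≥0∞) := by
  rw [← ENNReal.coe_add]
  exact ENNReal.ofReal_le_coe.2 (by exact_mod_cast h)

theorem withDensity_add_prod [SFinite μ] {u : X → ℝ≥0∞} (hu : Measurable u) :
    (μ.prod μ).withDensity (fun p => u p.1 + u p.2) =
      (μ.withDensity u).prod μ + μ.prod (μ.withDensity u) := by
  rw [prod_withDensity_left hu, prod_withDensity_right hu,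
    ← withDensity_add_left (by fun_prop)]
  rfl

theorem ae_le_add_of_ae_comp_le_add [SigmaFinite μ] [SigmaFinite ν] {T : X → Y}
    (hT : MeasurePreserving T μ ν) {F : Y × Y → ℝ≥0∞} (hF : Measurable F) {u : X → ℝ≥0∞}
    (hu : Measurable u) {v : Y → ℝ≥0∞} (hv : Measurable v)
    (huv : (μ.withDensity u).map T = ν.withDensity v)
    (hFu : ∀ᵐ p ∂(μ.prod μ), F (Prod.map T T p) ≤ u p.1 + u p.2) :
    ∀ᵐ q ∂(ν.prod ν), F q ≤ v q.1 + v q.2 := by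
  have hTT := hT.prod hT
  refine ae_le_of_forall_setLIntegral_le_of_sigmaFinite hF fun s hs _ => ?_
  calc ∫⁻ q in s, F q ∂(ν.prod ν)
      = ∫⁻ p in Prod.map T T ⁻¹' s, F (Prod.map T T p) ∂(μ.prod μ) :=
        (hTT.setLIntegral_comp_preimage hs hF).symm
    _ ≤ ∫⁻ p in Prod.map T T ⁻¹' s, (u p.1 + u p.2) ∂(μ.prod μ) :=
        lintegral_mono_ae (ae_restrict_of_ae hFu)
    _ = ((μ.prod μ).withDensity fun p => u p.1 + u p.2).map (Prod.map T T) s := by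
        rw [Measure.map_apply hTT.measurable hs, withDensity_apply _ (hTT.measurable hs)]
    _ = ((ν.prod ν).withDensity fun q => v q.1 + v q.2) s := by
        rw [withDensity_add_prod hu, withDensity_add_prod hv,
          Measure.map_add _ _ hTT.measurable,
          ← Measure.map_prod_map _ _ hT.measurable hT.measurable,
          ← Measure.map_prod_map _ _ hT.measurable hT.measurable, huv, hT.map_eq]
    _ = ∫⁻ q in s, (v q.1 + v q.2) ∂(ν.prod ν) := withDensity_apply _ hs

theorem SplitClose.of_comp [SigmaFinite μ] [SigmaFinite ν] {f g : Y → Y → ℝ}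
    (hf : Measurable (uncurry f)) (hg : Measurable (uncurry g)) {T : X → Y}
    (hT : MeasurePreserving T μ ν) (hfg : SplitClose μ η (f on T) (g on T)) :
    SplitClose ν η f g := by
  obtain ⟨u, hu, hfu, huη⟩ := hfg
  have hu' : Measurable fun x => (u x : ℝ≥0∞) := hu.coe_nnreal_ennreal
  have : IsFiniteMeasure (μ.withDensity fun x => u x) :=
    isFiniteMeasure_withDensity (huη.trans_lt ENNReal.coe_lt_top).ne
  -- `v ∘ T` is the conditional expectation of `u` given `T`.
  set κ := (μ.withDensity fun x => u x).map T with hκ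
  have hκν : κ ≪ ν := by
    rw [← hT.map_eq]
    exact (withDensity_absolutelyContinuous _ _).map hT.measurable
  set v := κ.rnDeriv ν
  have hv : Measurable v := Measure.measurable_rnDeriv κ ν
  have hvκ : ν.withDensity v = κ := Measure.withDensity_rnDeriv_eq κ ν hκν
  have hv_top : ∀ᵐ y ∂ν, v y < ∞ := Measure.rnDeriv_lt_top κ ν
  have hle : ∀ᵐ q ∂(ν.prod ν), ENNReal.ofReal |uncurry f q - uncurry g q| ≤ v q.1 + v q.2 := by
    refine ae_le_add_of_ae_comp_le_add hT (hf.sub hg).abs.ennreal_ofReal hu' hv hvκ.symm ?_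
    filter_upwards [hfu] with p hp
    exact ofReal_le_coe_add_coe hp
  refine ⟨fun y => (v y).toNNReal, hv.ennreal_toNNReal, ?_, ?_⟩
  · filter_upwards [hle, Measure.quasiMeasurePreserving_fst.ae hv_top,
      Measure.quasiMeasurePreserving_snd.ae hv_top] with q hq h₁ h₂
    refine LE.le.trans_eq ?_ (ENNReal.toReal_add h₁.ne h₂.ne)
    exact (ENNReal.ofReal_le_iff_le_toReal (ENNReal.add_ne_top.2 ⟨h₁.ne, h₂.ne⟩)).1 hq
  · calc ∫⁻ y, (v y).toNNReal ∂ν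
        ≤ ∫⁻ y, v y ∂ν := lintegral_mono fun y => ENNReal.coe_toNNReal_le_self
      _ = κ univ := by rw [← hvκ, withDensity_apply _ .univ, Measure.restrict_univ]
      _ = ∫⁻ x, u x ∂μ := by
        rw [hκ, Measure.map_apply hT.measurable .univ, preimage_univ,
          withDensity_apply _ .univ, Measure.restrict_univ]
      _ ≤ η := huη

theorem splitClose_comp_iff [SigmaFinite μ] [SigmaFinite ν] {f g : Y → Y → ℝ}
    (hf : Measurable (uncurry f)) (hg : Measurable (uncurry g)) {T : X → Y}
    (hT : MeasurePreserving T μ ν) : SplitClose μ η (f on T) (g on T) ↔ SplitClose ν η f g :=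
  ⟨.of_comp hf hg hT, fun hfg => hfg.comp hT⟩

end SplitClose

section Semimetric

variable {X Y : Type*} {ρ σ : X → X → ℝ}

theorem IsSemimetric.comp (hρ : IsSemimetric ρ) (T : Y → X) : IsSemimetric (ρ on T) :=
  ⟨fun _ _ => hρ.1 _ _, fun _ => hρ.2.1 _, fun _ _ => hρ.2.2.1 _ _, fun _ _ _ => hρ.2.2.2 _ _ _⟩

theorem IsSemimetric.abs_sub_le (hρ : IsSemimetric ρ) (x y x' y' : X) :
    |ρ x y - ρ x' y'| ≤ ρ x x' + ρ y y' := by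
  obtain ⟨-, -, hs, ht⟩ := hρ
  rw [abs_le]
  constructor
  · linarith [ht x' x y', ht x y y', hs x x']
  · linarith [ht x x' y, ht x' y' y, hs y y']

theorem IsSemimetric.add (hρ : IsSemimetric ρ) (hσ : IsSemimetric σ) : IsSemimetric (ρ + σ) := by
  obtain ⟨hρ0, hρd, hρs, hρt⟩ := hρ
  obtain ⟨hσ0, hσd, hσs, hσt⟩ := hσ
  refine ⟨fun x y => add_nonneg (hρ0 x y) (hσ0 x y), fun x => ?_, fun x y => ?_, fun x y z => ?_⟩
    <;> simp only [Pi.add_apply]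
  · rw [hρd, hσd, add_zero]
  · rw [hρs, hσs]
  · linarith [hρt x y z, hσt x y z]

theorem IsSemimetric.min_const (hρ : IsSemimetric ρ) (M : ℝ≥0) :
    IsSemimetric fun x y => min (ρ x y) M := by
  obtain ⟨h0, hd, hs, ht⟩ := hρ
  refine ⟨fun x y => le_min (h0 x y) M.2, fun x => by simp [hd], fun x y => by simp [hs x y],
    fun x y z => ?_⟩
  grind [ht x y z, h0 x y, h0 y z, M.coe_nonneg]

/-- `u x + u y` off the diagonal, where the diagonal is enlarged to an equivalence relation that is
measurable as soon as `ρ` and `u` are: in a general measurable space the diagonal itself is not. -/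
noncomputable def splitSemimetric (ρ : X → X → ℝ) (u : X → ℝ≥0) (x y : X) : ℝ :=
  open Classical in if ρ x y = 0 ∧ u x = u y then 0 else u x + u y

theorem IsSemimetric.splitSemimetric (hρ : IsSemimetric ρ) (u : X → ℝ≥0) :
    IsSemimetric (splitSemimetric ρ u) := by
  obtain ⟨h0, hd, hs, ht⟩ := hρ
  have hu : ∀ x, (0 : ℝ) ≤ u x := fun x => (u x).2
  have hzero : ∀ x y z, ρ x y = 0 → ρ y z = 0 → ρ x z = 0 := fun x y z hxy hyz =>
    le_antisymm ((ht x y z).trans_eq (by rw [hxy, hyz, add_zero])) (h0 x z)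
  refine ⟨fun x y => ?_, fun x => ?_, fun x y => ?_, fun x y z => ?_⟩
    <;> simp only [_root_.splitSemimetric] <;> grind

theorem splitSemimetric_le (ρ : X → X → ℝ) (u : X → ℝ≥0) (x y : X) :
    splitSemimetric ρ u x y ≤ u x + u y := by
  unfold splitSemimetric
  split_ifs
  · exact add_nonneg (u x).2 (u y).2
  · exact le_rfl

theorem measurable_splitSemimetric [MeasurableSpace X] (hρ : Measurable (uncurry ρ))
    {u : X → ℝ≥0} (hu : Measurable u) : Measurable (uncurry (splitSemimetric ρ u)) := by
  have hu₁ : Measurable fun p : X × X => u p.1 := hu.comp measurable_fst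
  have hu₂ : Measurable fun p : X × X => u p.2 := hu.comp measurable_snd
  exact Measurable.ite ((hρ (measurableSet_singleton 0)).inter (measurableSet_eq_fun hu₁ hu₂))
    measurable_const (hu₁.coe_nnreal_real.add hu₂.coe_nnreal_real)

end Semimetric

section Distances

theorem TotallyBoundedIn.mono {X : Type*} {d d' : (X → X → ℝ) → (X → X → ℝ) → ℝ≥0∞}
    {M : Set (X → X → ℝ)} (hM : TotallyBoundedIn d M) (hd : ∀ f g, d' f g ≤ d f g) :
    TotallyBoundedIn d' M := fun ε hε => by
  obtain ⟨N, hN, hMN⟩ := hM ε hε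
  refine ⟨N, hN, fun f hf => ?_⟩
  obtain ⟨g, hg, hfg⟩ := hMN f hf
  exact ⟨g, hg, (hd f g).trans_lt hfg⟩

variable {X : Type*} [MeasurableSpace X] {μ : Measure X} {ρ σ : X → X → ℝ} {η : ℝ≥0}

theorem L1dist_le_mdist (f g : X → X → ℝ) : L1dist μ f g ≤ mdist μ f g := by
  refine le_sInf ?_
  rintro _ ⟨ρ, -, -, hfg, rfl⟩
  exact lintegral_mono_ae (hfg.mono fun p hp => ENNReal.ofReal_le_ofReal hp)

theorem SplitClose.mdist_le [IsProbabilityMeasure μ] (hρ : IsSemimetric ρ) (hσ : IsSemimetric σ)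
    (hρm : Measurable (uncurry ρ)) (hσm : Measurable (uncurry σ)) (hρσ : SplitClose μ η ρ σ) :
    mdist μ ρ σ ≤ 2 * η := by
  obtain ⟨u, hu, hle, huη⟩ := hρσ
  have hu' : Measurable fun x => (u x : ℝ≥0∞) := hu.coe_nnreal_ennreal
  refine sInf_le_of_le ⟨splitSemimetric (ρ + σ) u, (hρ.add hσ).splitSemimetric u,
    measurable_splitSemimetric (hρm.add hσm) hu, ?_, rfl⟩ ?_
  · filter_upwards [hle] with p hp
    unfold splitSemimetric
    split_ifs with h
    · obtain ⟨hρ0, hσ0⟩ := (add_eq_zero_iff_of_nonneg (hρ.1 _ _) (hσ.1 _ _)).1 h.1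
      rw [hρ0, hσ0, sub_zero, abs_zero]
    · exact hp
  · calc ∫⁻ p, ENNReal.ofReal (splitSemimetric (ρ + σ) u p.1 p.2) ∂(μ.prod μ)
        ≤ ∫⁻ p : X × X, (u p.1 + u p.2 : ℝ≥0∞) ∂(μ.prod μ) := lintegral_mono fun p =>
          ofReal_le_coe_add_coe (splitSemimetric_le (ρ + σ) u p.1 p.2)
      _ = ∫⁻ x, u x ∂μ + ∫⁻ x, u x ∂μ := by
          rw [lintegral_add_left (f := fun p : X × X => (u p.1 : ℝ≥0∞)) (hu'.comp measurable_fst),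
            measurePreserving_fst.lintegral_comp hu', measurePreserving_snd.lintegral_comp hu']
      _ ≤ 2 * η := by
          rw [two_mul]
          exact add_le_add huη huη

end Distances

section Covers

variable {X : Type*} [MeasurableSpace X] {μ : Measure X} {ρ σ : X → X → ℝ} {ε : ℝ} {k K : ℕ}

theorem IsEpsCover.mono (h : IsEpsCover μ ρ ε k) (hσρ : ∀ x y, σ x y ≤ ρ x y) (hkK : k ≤ K) :
    IsEpsCover μ σ ε K := by
  obtain ⟨A, hA, hU, hA0, hdiam⟩ := h
  refine ⟨fun i => if hi : (i : ℕ) < k + 1 then A ⟨i, hi⟩ else ∅, fun i => ?_, ?_, ?_, ?_⟩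
  · dsimp only
    split_ifs
    exacts [hA _, .empty]
  · refine eq_univ_of_forall fun x => ?_
    obtain ⟨i, hi⟩ := mem_iUnion.1 (hU ▸ mem_univ x : x ∈ ⋃ i, A i)
    refine mem_iUnion.2 ⟨i.castLE (by lia), ?_⟩
    rwa [Fin.val_castLE, dif_pos i.2]
  · simpa using hA0
  · intro i hi0 x hx y hy
    by_cases hi : (i : ℕ) < k + 1
    · simp only [hi, dif_pos] at hx hy
      have hi0' : (⟨i, hi⟩ : Fin (k + 1)) ≠ 0 := fun h => hi0 (Fin.ext (congrArg Fin.val h :))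
      exact (hσρ x y).trans_lt (hdiam _ hi0' x hx y hy)
    · simp [hi] at hx

theorem exists_isEpsCover_of_epsEntropy_le {C : ℝ≥0∞} (hC : C ≠ ∞) :
    ∃ K : ℕ, ∀ {ρ : X → X → ℝ} {ε : ℝ}, epsEntropy μ ρ ε ≤ C → IsEpsCover μ ρ ε K := by
  have hC1 : C + 1 ≠ ∞ := ENNReal.add_ne_top.2 ⟨hC, ENNReal.one_ne_top⟩
  refine ⟨⌈(2 : ℝ) ^ (C + 1).toReal⌉₊, fun {ρ ε} h => ?_⟩
  obtain ⟨_, ⟨k, hk, rfl⟩, hkC⟩ :=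
    sInf_lt_iff.1 (h.trans_lt (ENNReal.lt_add_right hC one_ne_zero))
  refine hk.mono (fun _ _ => le_rfl) ?_
  obtain rfl | hk0 := k.eq_zero_or_pos
  · exact Nat.zero_le _
  have hlog : Real.logb 2 k < (C + 1).toReal := (ENNReal.ofReal_lt_iff_lt_toReal
    (Real.logb_nonneg one_lt_two (by exact_mod_cast hk0)) hC1).1 hkC
  have hpow : (k : ℝ) < 2 ^ (C + 1).toReal :=
    (Real.logb_lt_iff_lt_rpow one_lt_two (by exact_mod_cast hk0)).1 hlog
  exact_mod_cast hpow.le.trans (Nat.le_ceil _)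

theorem IsEpsCover.exists_measurable_index (h : IsEpsCover μ ρ ε k) :
    ∃ i : X → Fin (k + 1), Measurable i ∧ μ (i ⁻¹' {0}) < ENNReal.ofReal ε ∧
      ∀ x y, i x ≠ 0 → i x = i y → ρ x y < ε := by
  classical
  obtain ⟨A, hA, hU, hA0, hdiam⟩ := h
  have hex : ∀ x, ∃ n : ℕ, ∃ hn : n < k + 1, x ∈ A ⟨n, hn⟩ := fun x => by
    obtain ⟨i, hi⟩ := mem_iUnion.1 (hU ▸ mem_univ x : x ∈ ⋃ i, A i)
    exact ⟨i, i.2, hi⟩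
  set i : X → Fin (k + 1) := fun x => ⟨Nat.find (hex x), (Nat.find_spec (hex x)).1⟩
  have hmem : ∀ x, x ∈ A (i x) := fun x => (Nat.find_spec (hex x)).2
  have hi : Measurable i := by
    have hfind : Measurable fun x => Nat.find (hex x) := measurable_find hex fun n => by
      by_cases hn : n < k + 1
      · simpa [hn] using hA ⟨n, hn⟩
      · simp [hn]
    refine measurable_to_countable' fun j => ?_
    simpa only [i, preimage, mem_singleton_iff, Fin.ext_iff] using
      hfind (measurableSet_singleton (j : ℕ))
  refine ⟨i, hi, (measure_mono fun x hx => ?_).trans_lt hA0, fun x y hx hxy => ?_⟩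
  · exact mem_singleton_iff.1 (mem_preimage.1 hx) ▸ hmem x
  · exact hdiam _ hx x (hmem x) y (hxy ▸ hmem y)

theorem IsEpsCover.exists_measurable_representative [Nonempty X] (h : IsEpsCover μ ρ ε k) :
    ∃ (i : X → Fin (k + 1)) (p : Fin (k + 1) → X) (Z : Set X), Measurable i ∧ MeasurableSet Z ∧
      μ Z < ENNReal.ofReal ε ∧ ∀ x ∉ Z, ρ x (p (i x)) < ε := by
  obtain ⟨i, hi, hZ, hdiam⟩ := h.exists_measurable_index
  refine ⟨i, invFun i, i ⁻¹' {0}, hi, hi (measurableSet_singleton 0), hZ, fun x hx => ?_⟩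
  exact hdiam x _ hx (invFun_eq ⟨x, rfl⟩).symm

end Covers

section Clusters

variable {X ι : Type*} [MeasurableSpace X] {μ : Measure X}

theorem exists_splitClose_min [SFinite μ] [NeZero μ] {ρ : X → X → ℝ} (hρ : IsSemimetric ρ)
    (hρm : Measurable (uncurry ρ)) (hint : Integrable (uncurry ρ) (μ.prod μ)) {η : ℝ≥0}
    (hη : 0 < η) : ∃ M : ℝ≥0, SplitClose μ η ρ fun x y => min (ρ x y) M := by
  obtain ⟨x₀, hx₀⟩ := hint.prod_right_ae.exists
  have hm : Measurable (ρ x₀) := hρm.comp measurable_prodMk_left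
  obtain ⟨M, hM0, hM⟩ := (memLp_one_iff_integrable.2 hx₀).integral_indicator_norm_ge_nonneg_le
    (NNReal.coe_pos.2 hη)
  lift M to ℝ≥0 using hM0
  set A : Set X := {x | (M : ℝ) ≤ ‖ρ x₀ x‖₊}
  set w : X → ℝ := A.indicator (ρ x₀)
  have hw : Measurable w :=
    hm.indicator (measurableSet_le measurable_const hm.nnnorm.coe_nnreal_real)
  have hw_le : ∀ x, ρ x₀ x - M ≤ ‖w x‖ ∧ 0 ≤ ‖w x‖ := fun x => by
    refine ⟨?_, norm_nonneg _⟩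
    by_cases hx : x ∈ A
    · rw [show w x = ρ x₀ x from indicator_of_mem hx _]
      linarith [Real.le_norm_self (ρ x₀ x), M.2]
    · have hlt : ‖ρ x₀ x‖ < M := not_le.1 hx
      linarith [norm_nonneg (w x), Real.le_norm_self (ρ x₀ x)]
  refine ⟨2 * M, fun x => ‖w x‖₊, hw.nnnorm, .of_forall fun ⟨x, y⟩ => ?_, by simpa using! hM⟩
  have htri : ρ x y ≤ ρ x₀ x + ρ x₀ y := by
    simpa only [hρ.2.2.1 x x₀] using hρ.2.2.2 x x₀ y
  push_cast
  grind

theorem sum_lintegral_le_of_le_off_small [IsProbabilityMeasure μ] {s : Finset ι}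
    {g : ι → X → ℝ≥0∞} (hg : ∀ n, Measurable (g n)) {M ε : ℝ≥0∞} (hM : ∀ n x, g n x ≤ M)
    {Z : Set X} (hZ : MeasurableSet Z) (hμZ : μ Z ≤ ε)
    (hsum : ∀ x ∉ Z, ∑ n ∈ s, g n x ≤ s.card * ε) :
    ∑ n ∈ s, ∫⁻ x, g n x ∂μ ≤ s.card * ((1 + M) * ε) := by
  rw [← lintegral_finsetSum s fun n _ => hg n, ← lintegral_add_compl _ hZ]
  have hon : ∫⁻ x in Z, ∑ n ∈ s, g n x ∂μ ≤ s.card * M * ε :=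
    calc ∫⁻ x in Z, ∑ n ∈ s, g n x ∂μ ≤ ∫⁻ _ in Z, s.card * M ∂μ := lintegral_mono fun x => by
          simpa using Finset.sum_le_card_nsmul s (g · x) M fun n _ => hM n x
      _ ≤ s.card * M * ε := by
          rw [setLIntegral_const]
          gcongr
  have hoff : ∫⁻ x in Zᶜ, ∑ n ∈ s, g n x ∂μ ≤ s.card * ε :=
    calc ∫⁻ x in Zᶜ, ∑ n ∈ s, g n x ∂μ ≤ ∫⁻ _ in Zᶜ, s.card * ε ∂μ :=
          setLIntegral_mono measurable_const hsum
      _ ≤ s.card * ε := by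
          rw [setLIntegral_const]
          exact mul_le_of_le_one_right' prob_le_one
  calc _ ≤ s.card * M * ε + s.card * ε := add_le_add hon hoff
    _ = s.card * ((1 + M) * ε) := by ring

theorem SplitClose.of_representative [IsProbabilityMeasure μ] {σ τ : X → X → ℝ}
    (hσ : IsSemimetric σ) (hτ : IsSemimetric τ) (hσm : Measurable (uncurry σ))
    (hτm : Measurable (uncurry τ)) {r : X → X} (hr : Measurable r) {c ε : ℝ≥0}
    (hσc : ∫⁻ x, ENNReal.ofReal (σ x (r x)) ∂μ ≤ c)
    (hτc : ∫⁻ x, ENNReal.ofReal (τ x (r x)) ∂μ ≤ c)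
    (hε : ∀ x y, |σ (r x) (r y) - τ (r x) (r y)| ≤ ε) : SplitClose μ (c + c + ε) σ τ := by
  have hσr : Measurable fun x => (σ x (r x)).toNNReal :=
    (hσm.comp (measurable_id.prodMk hr)).real_toNNReal
  have hτr : Measurable fun x => (τ x (r x)).toNNReal :=
    (hτm.comp (measurable_id.prodMk hr)).real_toNNReal
  refine ⟨fun x => (σ x (r x)).toNNReal + (τ x (r x)).toNNReal + ε,
    (hσr.add hτr).add measurable_const, .of_forall fun ⟨x, y⟩ => ?_, ?_⟩
  · push_cast
    simp only [Real.coe_toNNReal _ (hσ.1 _ _), Real.coe_toNNReal _ (hτ.1 _ _)]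
    calc |σ x y - τ x y|
        ≤ |σ x y - σ (r x) (r y)| + |σ (r x) (r y) - τ (r x) (r y)| +
            |τ x y - τ (r x) (r y)| := by
          rw [abs_sub_comm (τ x y)]
          exact (abs_sub_le _ (τ (r x) (r y)) _).trans (by gcongr; exact abs_sub_le _ _ _)
      _ ≤ (σ x (r x) + σ y (r y)) + ε + (τ x (r x) + τ y (r y)) :=
          add_le_add_three (hσ.abs_sub_le ..) (hε x y) (hτ.abs_sub_le ..)
      _ ≤ σ x (r x) + τ x (r x) + ε + (σ y (r y) + τ y (r y) + ε) := by linarith [ε.2]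
  · push_cast
    rw [lintegral_add_right _ measurable_const,
      lintegral_add_left hσr.coe_nnreal_ennreal, lintegral_const, measure_univ, mul_one]
    gcongr <;> assumption

theorem exists_card_le_mul_card_of_mem_Icc {m : Type*} [Finite m] (M : ℝ) {ε : ℝ} (hε : 0 < ε) :
    ∃ L : ℕ, ∀ (s : Finset ι) (φ : ι → m → ℝ), (∀ n ∈ s, ∀ a, φ n a ∈ Icc 0 M) →
      ∃ S ⊆ s, s.card ≤ L * S.card ∧ ∀ n ∈ S, ∀ n' ∈ S, ∀ a, |φ n a - φ n' a| ≤ ε := by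
  have := Fintype.ofFinite m
  obtain ⟨L, hL⟩ := exists_card_le_mul_card_of_totallyBounded (ι := ι)
    (isCompact_univ_pi fun _ : m => isCompact_Icc (a := 0) (b := M)).totallyBounded hε
  refine ⟨L, fun s φ hφ => ?_⟩
  obtain ⟨S, hSs, hcard, hS⟩ := hL s φ fun n hn a _ => hφ n hn a
  exact ⟨S, hSs, hcard, fun n hn n' hn' a => (dist_le_pi_dist _ _ a).trans (hS n hn n' hn').le⟩

theorem IsEpsCover.exists_representative_card_le [IsProbabilityMeasure μ] {s : Finset ι}
    {F : ι → X → X → ℝ} (hF : ∀ n, IsSemimetric (F n)) (hFm : ∀ n, Measurable (uncurry (F n)))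
    {M ε : ℝ≥0} (hε : 0 < ε) (hFM : ∀ n x y, F n x y ≤ M) {k : ℕ}
    (hcov : IsEpsCover μ (fun x y => (∑ n ∈ s, F n x y) / s.card) ε k) :
    ∃ (i : X → Fin (k + 1)) (p : Fin (k + 1) → X), Measurable i ∧ ∃ S ⊆ s, s.card ≤ 2 * S.card ∧
      ∀ n ∈ S, ∫⁻ x, ENNReal.ofReal (F n x (p (i x))) ∂μ ≤ 2 * ((1 + M) * ε) := by
  have : Nonempty X := nonempty_of_isProbabilityMeasure μ
  obtain ⟨i, p, Z, hi, hZ, hμZ, hoff⟩ := hcov.exists_measurable_representative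
  rw [ENNReal.ofReal_coe_nnreal] at hμZ
  refine ⟨i, p, hi, _, Finset.filter_subset _ _, card_le_two_mul_card_filter_le ?_ ?_ ?_,
    fun n hn => (Finset.mem_filter.1 hn).2⟩
  · exact mul_ne_zero (by simp) (ENNReal.coe_ne_zero.2 hε.ne')
  · finiteness
  refine sum_lintegral_le_of_le_off_small (fun n => ?_) (fun n x => ?_) hZ hμZ.le fun x hx => ?_
  · exact ((hFm n).comp
      (measurable_id.prodMk ((measurable_of_countable p).comp hi))).ennreal_ofReal
  · exact ENNReal.ofReal_le_of_le_toReal (hFM n _ _)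
  · rw [← ENNReal.ofReal_sum_of_nonneg fun n _ => (hF n).1 _ _]
    obtain rfl | hs := s.eq_empty_or_nonempty
    · simp
    have hcard : (0 : ℝ) < s.card := by exact_mod_cast hs.card_pos
    refine ENNReal.ofReal_le_of_le_toReal ?_
    simpa using ((div_lt_iff₀' hcard).1 (hoff x hx)).le

theorem exists_splitClose_cluster [IsProbabilityMeasure μ] (M : ℝ≥0) {ε : ℝ≥0} (hε : 0 < ε)
    (k : ℕ) : ∃ L : ℕ, ∀ (s : Finset ι) (F : ι → X → X → ℝ), (∀ n, IsSemimetric (F n)) →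
      (∀ n, Measurable (uncurry (F n))) → (∀ n x y, F n x y ≤ M) →
      IsEpsCover μ (fun x y => (∑ n ∈ s, F n x y) / s.card) ε k →
      ∃ S ⊆ s, s.card ≤ L * S.card ∧
        ∀ a ∈ S, ∀ b ∈ S, SplitClose μ ((5 + 4 * M) * ε) (F a) (F b) := by
  obtain ⟨L, hL⟩ := exists_card_le_mul_card_of_mem_Icc (ι := ι)
    (m := Fin (k + 1) × Fin (k + 1)) M (NNReal.coe_pos.2 hε)
  refine ⟨2 * L, fun s F hF hFm hFM hcov => ?_⟩
  obtain ⟨i, p, hi, S₁, hS₁s, hcard₁, hS₁⟩ := hcov.exists_representative_card_le hF hFm hε hFM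
  obtain ⟨S, hSS₁, hcard, hS⟩ := hL S₁ (fun n jl => F n (p jl.1) (p jl.2))
    fun n _ jl => ⟨(hF n).1 _ _, hFM n _ _⟩
  refine ⟨S, hSS₁.trans hS₁s, ?_, fun a ha b hb => ?_⟩
  · calc s.card ≤ 2 * S₁.card := hcard₁
      _ ≤ 2 * (L * S.card) := Nat.mul_le_mul_left 2 hcard
      _ = 2 * L * S.card := (mul_assoc _ _ _).symm
  · have hr : Measurable fun x => p (i x) := (measurable_of_countable p).comp hi
    have hclose : SplitClose μ (2 * ((1 + M) * ε) + 2 * ((1 + M) * ε) + ε) (F a) (F b) :=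
      .of_representative (hF a) (hF b) (hFm a) (hFm b) hr (by exact_mod_cast hS₁ a (hSS₁ ha))
        (by exact_mod_cast hS₁ b (hSS₁ hb)) fun x y => hS a ha b hb (i x, i y)
    convert hclose using 1
    ring

end Clusters

section Orbits

variable {X : Type*} [MeasurableSpace X] {μ : Measure X} [IsProbabilityMeasure μ] {T : X → X}
  {ρ : X → X → ℝ}

theorem exists_splitClose_orbit_cluster (hT : MeasurePreserving T μ μ) (hρ : IsSemimetric ρ)
    (hρm : Measurable (uncurry ρ)) (hint : Integrable (uncurry ρ) (μ.prod μ))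
    (hent : ∀ ε : ℝ, 0 < ε → ∃ C : ℝ≥0∞, C ≠ ∞ ∧ ∀ n : ℕ, 1 ≤ n →
      epsEntropy μ
        (fun x y => (∑ k ∈ Finset.range n, ρ (T^[k + 1] x) (T^[k + 1] y)) / n) ε ≤ C)
    {η : ℝ≥0} (hη : 0 < η) :
    ∃ L : ℕ, ∀ N, 0 < N → ∃ S ⊆ Finset.range N, N ≤ L * S.card ∧
      ∀ a ∈ S, ∀ b ∈ S, SplitClose μ η (ρ on T^[a + 1]) (ρ on T^[b + 1]) := by
  obtain ⟨M, hM⟩ := exists_splitClose_min hρ hρm hint (show 0 < η / 4 by positivity)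
  set σ : X → X → ℝ := fun x y => min (ρ x y) M
  set ε : ℝ≥0 := η / 2 / (5 + 4 * M)
  have hε : 0 < ε := by positivity
  obtain ⟨C, hC, hCn⟩ := hent ε (NNReal.coe_pos.2 hε)
  obtain ⟨K, hK⟩ := exists_isEpsCover_of_epsEntropy_le (μ := μ) hC
  obtain ⟨L, hL⟩ := exists_splitClose_cluster (μ := μ) (ι := ℕ) M hε K
  have hcov : ∀ N, 0 < N → IsEpsCover μ (fun x y =>
      (∑ n ∈ Finset.range N, (σ on T^[n + 1]) x y) / (Finset.range N).card) ε K := fun N hN => by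
    refine (hK (hCn N hN)).mono (fun x y => ?_) le_rfl
    rw [Finset.card_range]
    gcongr
    exact min_le_left _ _
  refine ⟨L, fun N hN => ?_⟩
  obtain ⟨S, hSN, hcard, hS⟩ := hL (Finset.range N) (fun n => σ on T^[n + 1])
    (fun n => (hρ.min_const M).comp _)
    (fun n => measurable_uncurry_on (hρm.min measurable_const : Measurable (uncurry σ))
      (hT.iterate _).measurable)
    (fun n x y => min_le_right _ _) (hcov N hN)
  rw [Finset.card_range] at hcard
  refine ⟨S, hSN, hcard, fun a ha b hb => ?_⟩
  have hη' : η = η / 4 + (5 + 4 * M) * ε + η / 4 := by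
    rw [mul_div_cancel₀ _ (by positivity)]
    ring
  rw [hη']
  exact ((hM.comp (hT.iterate (a + 1))).trans (hS a ha b hb)).trans
    (hM.comp (hT.iterate (b + 1))).symm

theorem exists_finset_splitClose_orbit (hT : MeasurePreserving T μ μ)
    (hρm : Measurable (uncurry ρ)) {η : ℝ≥0} {L : ℕ}
    (hL : ∀ N, 0 < N → ∃ S ⊆ Finset.range N, N ≤ L * S.card ∧
      ∀ a ∈ S, ∀ b ∈ S, SplitClose μ η (ρ on T^[a + 1]) (ρ on T^[b + 1])) :
    ∃ B : Finset ℕ, ∀ n, ∃ m ∈ B, SplitClose μ η (ρ on T^[n]) (ρ on T^[m]) := by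
  have hm : ∀ n, Measurable (uncurry (ρ on T^[n])) := fun n =>
    measurable_uncurry_on hρm (hT.iterate n).measurable
  have hshift : ∀ a b q, SplitClose μ η (ρ on T^[a + q]) (ρ on T^[b + q]) ↔
      SplitClose μ η (ρ on T^[a]) (ρ on T^[b]) := fun a b q => by
    rw [iterate_add, iterate_add]
    exact splitClose_comp_iff (hm a) (hm b) (hT.iterate q)
  simp only [hshift] at hL
  exact exists_finset_forall_exists_rel (fun _ => .refl) (fun _ _ => .symm)
    fun B hB => card_le_of_pairwise_not_rel hshift hL hB

end Orbits

theorem statement14_general {X : Type*} [MeasurableSpace X]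
    (μ : Measure X) [IsProbabilityMeasure μ] (T : X → X) (hT : MeasurePreserving T μ μ)
    (ρ : X → X → ℝ) (hρ : IsSemimetric ρ) (hρm : Measurable (uncurry ρ))
    (hint : Integrable (uncurry ρ) (μ.prod μ))
    (hent : ∀ ε : ℝ, 0 < ε → ∃ C : ℝ≥0∞, C ≠ ∞ ∧ ∀ n : ℕ, 1 ≤ n →
      epsEntropy μ
        (fun x y => (∑ k ∈ Finset.range n, ρ (T^[k + 1] x) (T^[k + 1] y)) / n) ε ≤ C) :
    TotallyBoundedIn (mdist μ)
        {σ | ∃ n : ℕ, σ = fun x y => ρ (T^[n] x) (T^[n] y)} ∧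
      TotallyBoundedIn (L1dist μ)
        {σ | ∃ n : ℕ, σ = fun x y => ρ (T^[n] x) (T^[n] y)} := by
  have hm : ∀ n, Measurable (uncurry (ρ on T^[n])) := fun n =>
    measurable_uncurry_on hρm (hT.iterate n).measurable
  suffices h : TotallyBoundedIn (mdist μ) {σ | ∃ n : ℕ, σ = (ρ on T^[n])} from
    ⟨h, h.mono L1dist_le_mdist⟩
  intro ε hε
  obtain ⟨η, hη, hηε⟩ := ENNReal.lt_iff_exists_nnreal_btwn.1 (ENNReal.half_pos hε.ne')
  obtain ⟨L, hL⟩ := exists_splitClose_orbit_cluster hT hρ hρm hint hent (ENNReal.coe_pos.1 hη)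
  obtain ⟨B, hB⟩ := exists_finset_splitClose_orbit hT hρm hL
  refine ⟨(fun m => ρ on T^[m]) '' B, B.finite_toSet.image _, ?_⟩
  rintro _ ⟨n, rfl⟩
  obtain ⟨m, hmB, hnm⟩ := hB n
  refine ⟨_, mem_image_of_mem _ hmB, ?_⟩
  calc mdist μ (ρ on T^[n]) (ρ on T^[m])
      ≤ 2 * η := hnm.mdist_le (hρ.comp _) (hρ.comp _) (hm n) (hm m)
    _ < ε := by rwa [mul_comm, ← ENNReal.lt_div_iff_mul_lt (by simp) (by simp)]

/-- let `ρ` be an admissible summable semimetric and `T` a measure-preserving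
transformation (not necessarily invertible). If for every `ε > 0` the `ε`-entropies of the
averages `ρ_n^{av} = n⁻¹ ∑_{k=1}^n T^k ρ` are uniformly bounded in `n`, then the orbit
`{ρ, Tρ, T²ρ, …}` is precompact in the m-norm, and equivalently in `L¹(X×X, μ×μ)`. -/
theorem statement14 {X : Type*} [MeasurableSpace X] [StandardBorelSpace X]
    (μ : Measure X) [IsProbabilityMeasure μ] (T : X → X) (hT : MeasurePreserving T μ μ)
    (ρ : X → X → ℝ) (hρ : IsSemimetric ρ) (hadm : Admissible μ ρ)
    (hint : Integrable (Function.uncurry ρ) (μ.prod μ))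
    (hent : ∀ ε : ℝ, 0 < ε → ∃ C : ℝ≥0∞, C ≠ ∞ ∧ ∀ n : ℕ, 1 ≤ n →
      epsEntropy μ
        (fun x y => (∑ k ∈ Finset.range n, ρ (T^[k + 1] x) (T^[k + 1] y)) / n) ε ≤ C) :
    TotallyBoundedIn (mdist μ)
        {σ | ∃ n : ℕ, σ = fun x y => ρ (T^[n] x) (T^[n] y)} ∧
      TotallyBoundedIn (L1dist μ)
        {σ | ∃ n : ℕ, σ = fun x y => ρ (T^[n] x) (T^[n] y)} :=
  statement14_general μ T hT ρ hρ hadm.1 hint hent
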